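/- For every odd prime p, if G is a finite simple graph such that for every k the number of independent sets of size k in G equals the number of independent sets of size k in the cycle C_p, then G is isomorphic to C_p or G is isomorphic to D_p. -/

import Mathlib

open SimpleGraph Polynomial Finset

/-- The number of independent sets of size `k` in the graph `G`. -/
noncomputable def indepCount {V : Type*} [Fintype V] (G : SimpleGraph V) (k : ℕ) : ℕ :=
  Nat.card {s : Finset V // s.card = k ∧ ∀ u ∈ s, ∀ v ∈ s, ¬ G.Adj u v}

/-- The graph `D_n`: a triangle on the vertices `0, 1, 2` together with the
pendant path `2 - 3 - ⋯ - (n-1)`. -/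
def dGraph (n : ℕ) : SimpleGraph (Fin n) :=
  SimpleGraph.fromRel (fun u v =>
    (u.val = 0 ∧ v.val = 1) ∨ (u.val = 0 ∧ v.val = 2) ∨ (u.val = 1 ∧ v.val = 2) ∨
    (2 ≤ u.val ∧ v.val = u.val + 1))

theorem exists_adj_dist_eq {V : Type*} {H : SimpleGraph V} (hc : H.Connected) {a v : V} {k : ℕ}
    (hv : H.dist a v = k + 1) : ∃ u, H.Adj u v ∧ H.dist a u = k := by
  obtain ⟨w, hw⟩ := hc.exists_walk_length_eq_dist v a
  rw [SimpleGraph.dist_comm, hv] at hw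
  cases w with
  | nil => simp at hw
  | @cons _ u _ hadj q =>
    refine ⟨u, hadj.symm, ?_⟩
    have hle := H.dist_le q
    rw [SimpleGraph.dist_comm] at hle
    rw [Walk.length_cons] at hw
    have hdiff := hadj.diff_dist_adj (u := a)
    omega

theorem eq_of_degree_le_one {V : Type*} [Fintype V] {H : SimpleGraph V} [DecidableRel H.Adj]
    {a x y : V} (ha : H.degree a ≤ 1) (hx : H.Adj a x) (hy : H.Adj a y) : x = y :=
  Finset.card_le_one.1 ha x (by simpa using hx) y (by simpa using hy)

theorem eq_of_degree_le_two {V : Type*} [Fintype V] {H : SimpleGraph V} [DecidableRel H.Adj]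
    {a x y z : V} (ha : H.degree a ≤ 2) (hx : H.Adj a x) (hy : H.Adj a y) (hz : H.Adj a z) :
    x = y ∨ x = z ∨ y = z := by
  by_contra! hne
  refine absurd ha (not_le.2 (Finset.two_lt_card.2 ⟨x, ?_, y, ?_, z, ?_, hne⟩)) <;> simpa

/-- A connected graph of maximum degree at most two with a vertex `a` of degree at most one is a
path starting at `a`: the distance from `a` enumerates the vertices along it. -/
theorem exists_equiv_fin_adj_iff {V : Type*} [Fintype V] {H : SimpleGraph V} [DecidableRel H.Adj]
    (hc : H.Connected) (hdeg : ∀ v, H.degree v ≤ 2) {a : V} (ha : H.degree a ≤ 1) :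
    ∃ f : V ≃ Fin (Fintype.card V), (f a).val = 0 ∧
      ∀ u v, H.Adj u v ↔ (f u).val + 1 = (f v).val ∨ (f v).val + 1 = (f u).val := by
  have hinj : ∀ k u v, H.dist a u = k → H.dist a v = k → u = v := by
    intro k
    induction k with
    | zero =>
      intro u v hu hv
      rw [← hc.dist_eq_zero_iff.1 hu, hc.dist_eq_zero_iff.1 hv]
    | succ k ih =>
      intro u v hu hv
      obtain ⟨w, hwu, hw⟩ := exists_adj_dist_eq hc hu
      obtain ⟨w', hwv, hw'⟩ := exists_adj_dist_eq hc hv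
      obtain rfl := ih w w' hw hw'
      cases k with
      | zero =>
        obtain rfl := hc.dist_eq_zero_iff.1 hw
        exact eq_of_degree_le_one ha hwu hwv
      | succ j =>
        obtain ⟨x, hxw, hx⟩ := exists_adj_dist_eq hc hw
        rcases eq_of_degree_le_two (hdeg w) hwu hwv hxw.symm with h | rfl | rfl
        · exact h
        · omega
        · omega
  have hdown : ∀ k v, H.dist a v = k → ∀ j ≤ k, ∃ u, H.dist a u = j := by
    intro k
    induction k with
    | zero => exact fun v hv j hj => ⟨v, by omega⟩
    | succ k ih =>
      intro v hv j hj
      rcases Nat.lt_or_ge k j with h | h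
      · exact ⟨v, by omega⟩
      · obtain ⟨u, -, hu⟩ := exists_adj_dist_eq hc hv
        exact ih u hu j h
  have hlt : ∀ v, H.dist a v < Fintype.card V := by
    intro v
    choose g hg using fun j : Fin (H.dist a v + 1) => hdown _ v rfl j (by omega)
    have := Fintype.card_le_of_injective g fun i j hij => Fin.ext <| by
      rw [← hg i, ← hg j, hij]
    simpa using this
  have hbij : Function.Bijective (fun v => (⟨H.dist a v, hlt v⟩ : Fin (Fintype.card V))) := by
    rw [Fintype.bijective_iff_injective_and_card]
    exact ⟨fun u v huv => hinj _ u v rfl (by simpa using (Fin.ext_iff.1 huv).symm), by simp⟩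
  have hadj : ∀ u v, H.dist a u + 1 = H.dist a v → H.Adj u v := by
    intro u v huv
    obtain ⟨w, hwv, hw⟩ := exists_adj_dist_eq hc huv.symm
    rwa [hinj _ u w rfl hw]
  refine ⟨Equiv.ofBijective _ hbij, by simp, fun u v => ?_⟩
  simp only [Equiv.ofBijective_apply]
  constructor
  · intro huv
    have hne : H.dist a v ≠ H.dist a u := fun h => huv.ne (hinj _ u v h.symm rfl)
    have hdiff := huv.diff_dist_adj (u := a)
    omega
  · rintro (h | h)
    · exact hadj u v h
    · exact (hadj v u h).symm

theorem not_isBridge_of_triangle {V : Type*} {G : SimpleGraph V} {a b c : V}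
    (hab : G.Adj a b) (hbc : G.Adj b c) (hac : G.Adj a c) : ¬ G.IsBridge s(a, c) := by
  rw [isBridge_iff, not_not]
  have h₁ : (G.deleteEdges {s(a, c)}).Adj a b := by
    simp [deleteEdges_adj, hab, hbc.ne, hac.ne]
  have h₂ : (G.deleteEdges {s(a, c)}).Adj b c := by
    simp [deleteEdges_adj, hbc, hab.ne', hac.ne']
  exact h₁.reachable.trans h₂.reachable

theorem card_edgeSet_deleteEdges_add_one {V : Type*} [Finite V] {G : SimpleGraph V} {e : Sym2 V}
    (he : e ∈ G.edgeSet) : Nat.card (G.deleteEdges {e}).edgeSet + 1 = Nat.card G.edgeSet := by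
  rw [edgeSet_deleteEdges, Nat.card_coe_set_eq, Nat.card_coe_set_eq,
    Set.ncard_sdiff_singleton_add_one he]

/-- In a connected graph with as many edges as vertices, every edge of a triangle lies on every
other triangle. -/
theorem triangle_edge_mem_triangle {V : Type*} [Finite V] {G : SimpleGraph V} (hc : G.Connected)
    (hcard : Nat.card G.edgeSet = Nat.card V) {a b c x y z : V}
    (hab : G.Adj a b) (hbc : G.Adj b c) (hac : G.Adj a c)
    (hxy : G.Adj x y) (hyz : G.Adj y z) (hxz : G.Adj x z) :
    s(x, y) = s(a, c) ∨ s(y, z) = s(a, c) ∨ s(x, z) = s(a, c) := by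
  by_contra! hne
  have htree : (G.deleteEdges {s(a, c)}).IsTree := by
    refine isTree_iff_connected_and_card.2
      ⟨hc.connected_delete_edge_of_not_isBridge (not_isBridge_of_triangle hab hbc hac), ?_⟩
    rw [card_edgeSet_deleteEdges_add_one (by simpa using hac), hcard]
  have hadj : ∀ u v, G.Adj u v → s(u, v) ≠ s(a, c) → (G.deleteEdges {s(a, c)}).Adj u v :=
    fun u v huv h => deleteEdges_adj.2 ⟨huv, h⟩
  exact not_isBridge_of_triangle (hadj _ _ hxy hne.1) (hadj _ _ hyz hne.2.1) (hadj _ _ hxz hne.2.2)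
    (isAcyclic_iff_forall_adj_isBridge.1 htree.isAcyclic (hadj _ _ hxz hne.2.2))

theorem degree_lt_of_eq_deleteEdges {V : Type*} [Fintype V] {G H : SimpleGraph V}
    [DecidableRel G.Adj] [DecidableRel H.Adj] {e : Sym2 V} (hH : H = G.deleteEdges {e})
    (he : e ∈ G.edgeSet) {v : V} (hv : v ∈ e) : H.degree v < G.degree v := by
  obtain ⟨w, rfl⟩ := hv
  subst hH
  refine Finset.card_lt_card ⟨fun u hu => ?_, fun h => ?_⟩
  · rw [mem_neighborFinset] at hu ⊢
    exact deleteEdges_le _ hu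
  · have := h (by simpa using he : w ∈ G.neighborFinset v)
    simp [deleteEdges_adj] at this

theorem cycleGraph_adj_iff_val {n : ℕ} (hn : 2 ≤ n) (u v : Fin n) :
    (cycleGraph n).Adj u v ↔ (u.val + 1 = v.val ∨ v.val + 1 = u.val) ∨
      (u.val = 0 ∧ v.val + 1 = n) ∨ (v.val = 0 ∧ u.val + 1 = n) := by
  have hsub : ∀ x y : Fin n, (x - y).val = if y.val ≤ x.val then x.val - y.val
      else n + x.val - y.val := by
    intro x y
    split_ifs with h
    · exact Fin.sub_val_of_le h
    · rw [Fin.val_sub, Nat.mod_eq_of_lt] <;> omega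
  rw [cycleGraph_adj', hsub, hsub]
  split_ifs <;> omega

/-- A connected 2-regular graph with as many edges as vertices is a cycle. -/
theorem nonempty_iso_cycleGraph {V : Type*} [Fintype V] {G : SimpleGraph V} [DecidableRel G.Adj]
    (hc : G.Connected) (hcard : Nat.card G.edgeSet = Nat.card V) (hdeg : ∀ v, G.degree v = 2) :
    Nonempty (G ≃g cycleGraph (Fintype.card V)) := by
  classical
  obtain ⟨a, b, hab, hbr⟩ : ∃ a b, G.Adj a b ∧ ¬ G.IsBridge s(a, b) := by
    by_contra! h
    have htree : G.IsTree := ⟨hc, isAcyclic_iff_forall_adj_isBridge.2 h⟩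
    have := (isTree_iff_connected_and_card.1 htree).2
    omega
  obtain ⟨H, hH⟩ : ∃ H, H = G.deleteEdges {s(a, b)} := ⟨_, rfl⟩
  have hconn : H.Connected := hH ▸ hc.connected_delete_edge_of_not_isBridge hbr
  have hle : ∀ v, H.degree v ≤ G.degree v := fun v => degree_le_of_le (hH ▸ deleteEdges_le _)
  have hlta := degree_lt_of_eq_deleteEdges hH hab (Sym2.mem_mk_left a b)
  have hltb := degree_lt_of_eq_deleteEdges hH hab (Sym2.mem_mk_right a b)
  rw [hdeg] at hlta hltb
  obtain ⟨f, hfa, hf⟩ := exists_equiv_fin_adj_iff hconn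
    (fun v => (hle v).trans (hdeg v).le) (a := a) (by omega)
  have hfb : (f b).val + 1 = Fintype.card V := by
    by_contra hne
    have hb0 : (f b).val ≠ 0 := fun h => hab.ne (f.injective (Fin.ext (hfa.trans h.symm)))
    have hbn := (f b).isLt
    have hprev : H.Adj b (f.symm ⟨(f b).val - 1, by omega⟩) := by
      rw [hf, Equiv.apply_symm_apply]
      right
      simp only
      omega
    have hnext : H.Adj b (f.symm ⟨(f b).val + 1, by omega⟩) := by
      rw [hf, Equiv.apply_symm_apply]
      exact Or.inl rfl
    have := f.symm.injective (eq_of_degree_le_one (by omega) hprev hnext)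
    simp only [Fin.mk.injEq] at this
    omega
  have hcard2 : 2 ≤ Fintype.card V := by
    have := (f b).isLt
    have hb0 : (f b).val ≠ 0 := fun h => hab.ne (f.injective (Fin.ext (hfa.trans h.symm)))
    omega
  refine ⟨⟨f, fun {u v} => ?_⟩⟩
  have hG : G.Adj u v ↔ H.Adj u v ∨ s(u, v) = s(a, b) := by
    rw [hH, deleteEdges_adj, Set.mem_singleton_iff]
    refine ⟨fun h => by tauto, ?_⟩
    rintro (h | h)
    · exact h.1
    · rwa [← mem_edgeSet, h, mem_edgeSet]
  have ha' : ∀ w, w = a ↔ (f w).val = 0 := fun w => by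
    rw [← hfa, ← Fin.ext_iff, f.injective.eq_iff]
  have hb' : ∀ w, w = b ↔ (f w).val + 1 = Fintype.card V := fun w => by
    rw [← f.injective.eq_iff, Fin.ext_iff]
    omega
  rw [cycleGraph_adj_iff_val hcard2, hG, hf, Sym2.eq_iff, ha', ha', hb', hb']
  tauto

theorem dGraph_adj_iff_val {n : ℕ} (u v : Fin n) :
    (dGraph n).Adj u v ↔ (u.val + 1 = v.val ∨ v.val + 1 = u.val) ∨
      (u.val = 0 ∧ v.val = 2) ∨ (u.val = 2 ∧ v.val = 0) := by
  rw [dGraph, fromRel_adj, Ne, Fin.ext_iff]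
  omega

/-- A connected graph of maximum degree at most three, with a triangle containing its only vertex
of degree three, is a triangle with a pendant path. -/
theorem nonempty_iso_dGraph {V : Type*} [Fintype V] {G : SimpleGraph V} [DecidableRel G.Adj]
    (hc : G.Connected) {a b c : V} (hab : G.Adj a b) (hbc : G.Adj b c) (hac : G.Adj a c)
    (hdegc : G.degree c ≤ 3) (hdeg : ∀ v, v ≠ c → G.degree v ≤ 2) :
    Nonempty (G ≃g dGraph (Fintype.card V)) := by
  classical
  obtain ⟨H, hH⟩ : ∃ H, H = G.deleteEdges {s(a, c)} := ⟨_, rfl⟩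
  have hconn : H.Connected := hH ▸ hc.connected_delete_edge_of_not_isBridge
    (not_isBridge_of_triangle hab hbc hac)
  have hle : ∀ v, H.degree v ≤ G.degree v := fun v => degree_le_of_le (hH ▸ deleteEdges_le _)
  have hlta := degree_lt_of_eq_deleteEdges hH hac (Sym2.mem_mk_left a c)
  have hltc := degree_lt_of_eq_deleteEdges hH hac (Sym2.mem_mk_right a c)
  have hdega := hdeg a hac.ne
  obtain ⟨f, hfa, hf⟩ := exists_equiv_fin_adj_iff hconn
    (fun v => by
      by_cases hv : v = c
      · subst hv
        omega
      · exact (hle v).trans (hdeg v hv)) (a := a) (by omega)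
  have hHab : H.Adj a b := by
    simp [hH, deleteEdges_adj, hab, hbc.ne, hac.ne]
  have hHbc : H.Adj b c := by
    simp [hH, deleteEdges_adj, hbc, hab.ne', hac.ne']
  have hc0 : (f c).val ≠ 0 := fun h => hac.ne (f.injective (Fin.ext (hfa.trans h.symm)))
  rw [hf] at hHab hHbc
  have hfc : (f c).val = 2 := by omega
  refine ⟨⟨f, fun {u v} => ?_⟩⟩
  have hG : G.Adj u v ↔ H.Adj u v ∨ s(u, v) = s(a, c) := by
    rw [hH, deleteEdges_adj, Set.mem_singleton_iff]
    refine ⟨fun h => by tauto, ?_⟩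
    rintro (h | h)
    · exact h.1
    · rwa [← mem_edgeSet, h, mem_edgeSet]
  have ha' : ∀ w, w = a ↔ (f w).val = 0 := fun w => by
    rw [← hfa, ← Fin.ext_iff, f.injective.eq_iff]
  have hc' : ∀ w, w = c ↔ (f w).val = 2 := fun w => by
    rw [← hfc, ← Fin.ext_iff, f.injective.eq_iff]
  rw [dGraph_adj_iff_val, hG, hf, Sym2.eq_iff, ha', ha', hc', hc']

theorem indepCount_eq_card_filter {V : Type*} [Fintype V] [DecidableEq V] (G : SimpleGraph V)
    [DecidableRel G.Adj] (k : ℕ) :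
    indepCount G k = #{s : Finset V | #s = k ∧ ∀ u ∈ s, ∀ v ∈ s, ¬ G.Adj u v} := by
  rw [indepCount, Nat.card_eq_fintype_card, Fintype.card_subtype]

theorem indepCount_zero {V : Type*} [Fintype V] (G : SimpleGraph V) : indepCount G 0 = 1 := by
  classical
  rw [indepCount_eq_card_filter, Finset.card_eq_one]
  exact ⟨∅, by ext s; simp +contextual [Finset.card_eq_zero]⟩

theorem indepCount_one {V : Type*} [Fintype V] (G : SimpleGraph V) :
    indepCount G 1 = Fintype.card V := by
  classical
  rw [indepCount_eq_card_filter, ← Finset.card_univ, eq_comm]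
  refine Finset.card_bij (fun v _ => {v}) (by simp) (by simp) ?_
  intro s hs
  obtain ⟨v, rfl⟩ := Finset.card_eq_one.1 (Finset.mem_filter.1 hs).2.1
  exact ⟨v, by simp⟩

theorem two_mul_indepCount_two {V : Type*} [Fintype V] [DecidableEq V] (G : SimpleGraph V)
    [DecidableRel G.Adj] :
    2 * indepCount G 2 = #{t : V × V | Gᶜ.Adj t.1 t.2} := by
  rw [indepCount_eq_card_filter, Finset.card_eq_sum_card_fiberwise
    (f := fun t : V × V => {t.1, t.2})
    (t := {s : Finset V | #s = 2 ∧ ∀ u ∈ s, ∀ v ∈ s, ¬ G.Adj u v}), Finset.sum_const_nat (m := 2),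
    mul_comm]
  · intro s hs
    obtain ⟨hs2, hind⟩ := (Finset.mem_filter.1 hs).2
    obtain ⟨a, b, hab, rfl⟩ := Finset.card_eq_two.1 hs2
    have : ({t ∈ ({t : V × V | Gᶜ.Adj t.1 t.2} : Finset (V × V)) |
        ({t.1, t.2} : Finset V) = {a, b}}) = {(a, b), (b, a)} := by
      ext ⟨x, y⟩
      simp only [Finset.mem_filter, Finset.mem_univ, true_and, compl_adj, Finset.mem_insert,
        Finset.mem_singleton, Prod.mk.injEq] at hind ⊢
      constructor
      · rintro ⟨⟨hxy, -⟩, h⟩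
        have hx : x ∈ ({a, b} : Finset V) := h ▸ by simp
        have hy : y ∈ ({a, b} : Finset V) := h ▸ by simp
        simp only [Finset.mem_insert, Finset.mem_singleton] at hx hy
        grind
      · rintro (⟨rfl, rfl⟩ | ⟨rfl, rfl⟩)
        · exact ⟨⟨hab, hind _ (by simp) _ (by simp)⟩, rfl⟩
        · exact ⟨⟨hab.symm, hind _ (by simp) _ (by simp)⟩, Finset.pair_comm _ _⟩
    rw [this]
    exact Finset.card_pair (by simp [hab])
  · rintro ⟨x, y⟩ ht
    simp only [Finset.coe_filter, Finset.mem_univ, true_and, compl_adj, Set.mem_ofPred_eq] at ht ⊢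
    refine ⟨Finset.card_pair ht.1, ?_⟩
    simp [ht.2, G.adj_comm y x]

theorem six_mul_indepCount_three {V : Type*} [Fintype V] [DecidableEq V] (G : SimpleGraph V)
    [DecidableRel G.Adj] :
    6 * indepCount G 3 =
      #{t : V × V × V | Gᶜ.Adj t.1 t.2.1 ∧ Gᶜ.Adj t.1 t.2.2 ∧ Gᶜ.Adj t.2.1 t.2.2} := by
  rw [indepCount_eq_card_filter, Finset.card_eq_sum_card_fiberwise
    (f := fun t : V × V × V => {t.1, t.2.1, t.2.2})
    (t := {s : Finset V | #s = 3 ∧ ∀ u ∈ s, ∀ v ∈ s, ¬ G.Adj u v}), Finset.sum_const_nat (m := 6),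
    mul_comm]
  · intro s hs
    obtain ⟨hs3, hind⟩ := (Finset.mem_filter.1 hs).2
    obtain ⟨a, b, c, hab, hac, hbc, rfl⟩ := Finset.card_eq_three.1 hs3
    have : ({t ∈ ({t : V × V × V | Gᶜ.Adj t.1 t.2.1 ∧ Gᶜ.Adj t.1 t.2.2 ∧ Gᶜ.Adj t.2.1 t.2.2} :
        Finset (V × V × V)) | ({t.1, t.2.1, t.2.2} : Finset V) = {a, b, c}}) =
        {(a, b, c), (a, c, b), (b, a, c), (b, c, a), (c, a, b), (c, b, a)} := by
      ext ⟨x, y, z⟩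
      simp only [Finset.mem_filter, Finset.mem_univ, true_and, compl_adj, Finset.mem_insert,
        Finset.mem_singleton, Prod.mk.injEq]
      constructor
      · rintro ⟨⟨⟨hxy, -⟩, ⟨hxz, -⟩, hyz, -⟩, h⟩
        have hx : x ∈ ({a, b, c} : Finset V) := h ▸ by simp
        have hy : y ∈ ({a, b, c} : Finset V) := h ▸ by simp
        have hz : z ∈ ({a, b, c} : Finset V) := h ▸ by simp
        simp only [Finset.mem_insert, Finset.mem_singleton] at hx hy hz
        grind
      · intro h
        have hset : ({x, y, z} : Finset V) = {a, b, c} := by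
          ext w
          simp only [Finset.mem_insert, Finset.mem_singleton]
          grind
        have hind' := hind
        rw [← hset] at hind'
        simp only [Finset.mem_insert, Finset.mem_singleton] at hind'
        refine ⟨?_, hset⟩
        grind
    rw [this]
    have := hab.symm
    have := hac.symm
    have := hbc.symm
    repeat rw [Finset.card_insert_of_notMem (by simp [*])]
    simp
  · rintro ⟨x, y, z⟩ ht
    simp only [Finset.coe_filter, Finset.mem_univ, true_and, compl_adj, Set.mem_ofPred_eq] at ht ⊢
    obtain ⟨⟨hxy, hxy'⟩, ⟨hxz, hxz'⟩, hyz, hyz'⟩ := ht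
    refine ⟨Finset.card_eq_three.2 ⟨x, y, z, hxy, hxz, hyz, rfl⟩, ?_⟩
    have := G.adj_comm
    have := fun v => G.irrefl (v := v)
    simp only [Finset.mem_insert, Finset.mem_singleton]
    grind

/-- Rotation acts without fixed points on the nonempty independent sets of a cycle. -/
theorem prime_dvd_indepCount_cycleGraph {p : ℕ} (hp : p.Prime) (hp3 : 3 ≤ p) {k : ℕ} (hk : k ≠ 0) :
    p ∣ indepCount (cycleGraph p) k := by
  classical
  obtain ⟨n, rfl⟩ := Nat.exists_eq_add_of_le' hp3
  have : Fact (n + 3).Prime := ⟨hp⟩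
  set α := {s : Finset (Fin (n + 3)) // #s = k ∧ ∀ u ∈ s, ∀ v ∈ s, ¬ (cycleGraph (n + 3)).Adj u v}
  let f : Function.End α := fun s => ⟨s.1.map (Equiv.addRight 1).toEmbedding, by
    rw [Finset.card_map]
    exact s.2.1, by
    simp only [Finset.mem_map_equiv]
    intro u hu v hv huv
    refine s.2.2 _ hu _ hv ?_
    simpa [cycleGraph_adj] using huv⟩
  have hf : ∀ (m : ℕ) (s : α),
      ((f ^ m) s).1 = s.1.map (Equiv.addRight (m • (1 : Fin (n + 3)))).toEmbedding := by
    intro m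
    induction m with
    | zero =>
      intro s
      ext
      simp only [zero_nsmul, Equiv.addRight_zero, Finset.mem_map_equiv]
      rfl
    | succ m ih =>
      intro s
      have hmul : (f ^ (m + 1)) s = (f ^ m) (f s) := by rw [pow_succ]; rfl
      rw [hmul, ih, Finset.map_map]
      congr 1
      ext x
      simp [succ_nsmul', add_assoc]
  have hfp : f ^ (n + 3) ^ 1 = 1 := by
    funext s
    refine Subtype.ext ((hf _ s).trans ?_)
    have hcard : (n + 3) • (1 : Fin (n + 3)) = 0 := by
      simpa using card_nsmul_eq_zero (x := (1 : Fin (n + 3)))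
    ext x
    simp only [pow_one, hcard, Equiv.addRight_zero, Finset.mem_map_equiv]
    rfl
  have hempty : IsEmpty (Function.fixedPoints f) := by
    refine ⟨fun ⟨s, hs⟩ => ?_⟩
    obtain ⟨v, hv⟩ := Finset.card_pos.1 (Nat.pos_of_ne_zero (s.2.1 ▸ hk))
    have hv' : v + 1 ∈ (f s).1 := Finset.mem_map.2 ⟨v, hv, rfl⟩
    rw [show f s = s from hs] at hv'
    exact s.2.2 v hv (v + 1) hv' (by simp [cycleGraph_adj])
  have hmod := Equiv.Perm.card_fixedPoints_modEq hfp
  rw [Fintype.card_eq_zero (α := Function.fixedPoints f), Nat.modEq_zero_iff_dvd] at hmod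
  rwa [indepCount, Nat.card_eq_fintype_card]

/-- The independence polynomial of the subgraph induced by `S`. -/
noncomputable def indepPolyOn (R : Type*) [CommSemiring R] {V : Type*} (G : SimpleGraph V)
    [DecidableRel G.Adj] (S : Finset V) : R[X] :=
  ∑ s ∈ S.powerset with ∀ u ∈ s, ∀ v ∈ s, ¬ G.Adj u v, X ^ #s

theorem coeff_indepPolyOn_univ (R : Type*) [CommSemiring R] {V : Type*} [Fintype V]
    (G : SimpleGraph V) [DecidableRel G.Adj] (k : ℕ) :
    (indepPolyOn R G Finset.univ).coeff k = indepCount G k := by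
  classical
  simp only [indepPolyOn, finsetSum_coeff, coeff_X_pow, indepCount_eq_card_filter]
  rw [Finset.sum_boole, Finset.filter_filter]
  congr 2
  ext s
  simp [and_comm, eq_comm]

theorem coeff_one_indepPolyOn (R : Type*) [CommSemiring R] {V : Type*} (G : SimpleGraph V)
    [DecidableRel G.Adj] (S : Finset V) : (indepPolyOn R G S).coeff 1 = #S := by
  classical
  simp only [indepPolyOn, finsetSum_coeff, coeff_X_pow]
  rw [Finset.sum_boole, Finset.filter_filter]
  congr 1
  symm
  refine Finset.card_bij (fun v _ => {v}) (by simp) (by simp) ?_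
  intro s hs
  obtain ⟨hsS, -, hs1⟩ := Finset.mem_filter.1 hs
  obtain ⟨v, rfl⟩ := Finset.card_eq_one.1 hs1.symm
  exact ⟨v, by simpa using hsS, rfl⟩

theorem indepPolyOn_union (R : Type*) [CommSemiring R] {V : Type*} [DecidableEq V]
    (G : SimpleGraph V) [DecidableRel G.Adj] {S T : Finset V} (hST : Disjoint S T)
    (hadj : ∀ u ∈ S, ∀ v ∈ T, ¬ G.Adj u v) :
    indepPolyOn R G (S ∪ T) = indepPolyOn R G S * indepPolyOn R G T := by
  classical
  simp only [indepPolyOn]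
  rw [Finset.sum_mul_sum, ← Finset.sum_product']
  refine Finset.sum_nbij' (fun s => (s ∩ S, s ∩ T)) (fun t => t.1 ∪ t.2) ?_ ?_ ?_ ?_ ?_
  · intro s hs
    simp only [Finset.mem_filter, Finset.mem_powerset, Finset.mem_product, Finset.mem_inter] at hs ⊢
    exact ⟨⟨Finset.inter_subset_right, fun u hu v hv => hs.2 u hu.1 v hv.1⟩,
      Finset.inter_subset_right, fun u hu v hv => hs.2 u hu.1 v hv.1⟩
  · rintro ⟨s, t⟩ hst
    simp only [Finset.mem_filter, Finset.mem_powerset, Finset.mem_product, Finset.mem_union]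
      at hst ⊢
    obtain ⟨⟨hs, hs'⟩, ht, ht'⟩ := hst
    refine ⟨Finset.union_subset_union hs ht, ?_⟩
    rintro u (hu | hu) v (hv | hv)
    · exact hs' u hu v hv
    · exact hadj u (hs hu) v (ht hv)
    · exact fun h => hadj v (hs hv) u (ht hu) h.symm
    · exact ht' u hu v hv
  · intro s hs
    rw [← Finset.inter_union_distrib_left]
    exact Finset.inter_eq_left.2 (Finset.mem_powerset.1 (Finset.mem_filter.1 hs).1)
  · rintro ⟨s, t⟩ hst
    simp only [Finset.mem_filter, Finset.mem_powerset, Finset.mem_product] at hst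
    have := Finset.disjoint_left.1 hST
    have hs := hst.1.1
    have ht := hst.2.1
    ext x <;> simp only [Finset.mem_inter, Finset.mem_union] <;> grind
  · intro s hs
    have hsub := Finset.mem_powerset.1 (Finset.mem_filter.1 hs).1
    rw [← pow_add, ← Finset.card_union_of_disjoint
      (hST.mono Finset.inter_subset_right Finset.inter_subset_right),
      ← Finset.inter_union_distrib_left, Finset.inter_eq_left.2 hsub]

/-- If a prime number `p` of vertices divides all the numbers of nonempty independent sets of given
size, the independence polynomial is `1` modulo `p`, so that no proper union of components has
order prime to `p`. -/
theorem connected_of_prime_dvd_indepCount {V : Type*} [Fintype V] (G : SimpleGraph V) {p : ℕ}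
    (hp : p.Prime) (hcard : Fintype.card V = p) (h : ∀ k, k ≠ 0 → p ∣ indepCount G k) :
    G.Connected := by
  classical
  have : Fact p.Prime := ⟨hp⟩
  have : Nonempty V := Fintype.card_pos_iff.1 (hcard ▸ hp.pos)
  refine ⟨fun a b => ?_⟩
  by_contra hab
  have hone : indepPolyOn (ZMod p) G Finset.univ = 1 := by
    ext k
    rw [coeff_indepPolyOn_univ, coeff_one]
    split_ifs with hk
    · rw [hk, indepCount_zero, Nat.cast_one]
    · exact (ZMod.natCast_eq_zero_iff _ _).2 (h k hk)
  set S : Finset V := {v | G.Reachable a v}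
  have hsplit := indepPolyOn_union (ZMod p) G (disjoint_compl_right (a := S)) (by
    intro u hu v hv huv
    simp only [S, Finset.mem_compl, Finset.mem_filter, Finset.mem_univ, true_and] at hu hv
    exact hv (hu.trans huv.reachable))
  rw [Finset.union_compl, hone] at hsplit
  have hunit : IsUnit (indepPolyOn (ZMod p) G S) := IsUnit.of_mul_eq_one _ hsplit.symm
  have hcoeff := coeff_one_indepPolyOn (ZMod p) G S
  rw [coeff_eq_zero_of_natDegree_lt (by rw [natDegree_eq_zero_of_isUnit hunit]; exact one_pos),
    eq_comm, ZMod.natCast_eq_zero_iff] at hcoeff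
  have hpos : 0 < #S := Finset.card_pos.2 ⟨a, by simp [S]⟩
  have hlt : #S < p := by
    rw [← hcard, ← Finset.card_univ]
    exact Finset.card_lt_card (Finset.ssubset_univ_iff.2 fun hS => hab (by
      have := Finset.mem_univ b
      rw [← hS] at this
      simpa [S] using this))
  exact absurd (Nat.le_of_dvd hpos hcoeff) (not_le.2 hlt)

/-- The number of ordered triangles of a graph. -/
def orderedTriangleCount {V : Type*} [Fintype V] (G : SimpleGraph V) [DecidableRel G.Adj] : ℕ :=
  #{t : V × V × V | G.Adj t.1 t.2.1 ∧ G.Adj t.1 t.2.2 ∧ G.Adj t.2.1 t.2.2}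

theorem sum_boole_adj {V : Type*} [Fintype V] (G : SimpleGraph V) [DecidableRel G.Adj] (u : V) :
    ∑ v, (if G.Adj u v then (1 : ℤ) else 0) = G.degree u := by
  rw [Finset.sum_boole, SimpleGraph.degree, neighborFinset_eq_filter]

theorem two_mul_indepCount_two_eq {V : Type*} [Fintype V] (G : SimpleGraph V)
    [DecidableRel G.Adj] :
    (2 * indepCount G 2 : ℤ) = (Fintype.card V : ℤ) ^ 2 - ∑ v, ((G.degree v : ℤ) + 1) := by
  classical
  have hB : ∀ u v, (if Gᶜ.Adj u v then (1 : ℤ) else 0) =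
      1 - ((if G.Adj u v then 1 else 0) + if u = v then 1 else 0) := by
    intro u v
    by_cases huv : u = v
    · subst huv
      simp
    · by_cases h : G.Adj u v <;> simp [huv, h]
  have h := congrArg (Nat.cast (R := ℤ)) (two_mul_indepCount_two G)
  rw [Finset.card_filter] at h
  push_cast at h
  rw [h, Fintype.sum_prod_type]
  simp only [hB, Finset.sum_sub_distrib, Finset.sum_add_distrib, sum_boole_adj]
  simp
  ring

theorem six_mul_indepCount_three_eq {V : Type*} [Fintype V] (G : SimpleGraph V)
    [DecidableRel G.Adj] :
    (6 * indepCount G 3 : ℤ) = (Fintype.card V : ℤ) ^ 3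
      - 3 * Fintype.card V * ∑ v, ((G.degree v : ℤ) + 1) + 3 * ∑ v, ((G.degree v : ℤ) + 1) ^ 2
      - (orderedTriangleCount G + 3 * ∑ v, (G.degree v : ℤ) + Fintype.card V) := by
  classical
  set A : V → V → ℤ := fun u v => if G.Adj u v then 1 else 0 with hA
  set C : V → V → ℤ := fun u v => A u v + if u = v then 1 else 0 with hC
  have hB : ∀ u v, (if Gᶜ.Adj u v then (1 : ℤ) else 0) = 1 - C u v := by
    intro u v
    by_cases huv : u = v
    · subst huv
      simp [hC, hA]
    · by_cases h : G.Adj u v <;> simp [hC, hA, huv, h]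
  have hCsymm : ∀ u v, C u v = C v u := fun u v => by
    simp only [hC, hA, G.adj_comm u v, eq_comm (a := u)]
  have hCsum : ∀ u, ∑ v, C u v = G.degree u + 1 := fun u => by
    simp only [hC, hA, Finset.sum_add_distrib, sum_boole_adj]
    simp
  have hCsum' : ∀ u, ∑ v, C v u = G.degree u + 1 := fun u => by
    simp only [hCsymm _ u, hCsum]
  have htri : ∑ u, ∑ v, ∑ w, C u v * C u w * C v w =
      orderedTriangleCount G + 3 * ∑ v, (G.degree v : ℤ) + Fintype.card V := by
    have hpt : ∀ u v w, C u v * C u w * C v w = A u v * A u w * A v w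
        + (if u = v then A u w else 0) + (if u = w then A u v else 0)
        + (if v = w then A u v else 0) + (if u = v then if u = w then 1 else 0 else 0) := by
      intro u v w
      have := G.adj_comm
      simp only [hC, hA]
      by_cases huv : u = v <;> by_cases huw : u = w <;> by_cases hvw : v = w <;> subst_vars <;>
        simp_all
    have hT : (orderedTriangleCount G : ℤ) = ∑ u, ∑ v, ∑ w, A u v * A u w * A v w := by
      rw [orderedTriangleCount, Finset.card_filter]
      push_cast
      simp only [Fintype.sum_prod_type, hA, ← ite_and, mul_ite, mul_one, mul_zero]
      refine Finset.sum_congr rfl fun u _ => Finset.sum_congr rfl fun v _ =>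
        Finset.sum_congr rfl fun w _ => if_congr (by tauto) rfl rfl
    have hAsum : ∀ u, ∑ v, A u v = G.degree u := sum_boole_adj G
    simp only [hpt, Finset.sum_add_distrib, hT]
    have h₁ : ∀ u, ∑ v, ∑ w, (if u = v then A u w else 0) = (G.degree u : ℤ) := fun u => by
      rw [Finset.sum_comm]
      simp [hAsum]
    have h₂ : ∀ u, ∑ v, ∑ w, (if u = w then A u v else 0) = (G.degree u : ℤ) := fun u => by
      simp [hAsum]
    have h₃ : ∀ u, ∑ v, ∑ w, (if v = w then A u v else 0) = (G.degree u : ℤ) := fun u => by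
      simp [hAsum]
    have h₄ : ∀ u : V, ∑ v, ∑ w, (if u = v then if u = w then (1 : ℤ) else 0 else 0) = 1 :=
      fun u => by
        rw [Finset.sum_comm]
        simp
    simp only [h₁, h₂, h₃, h₄]
    simp
    ring
  have h := congrArg (Nat.cast (R := ℤ)) (six_mul_indepCount_three G)
  rw [Finset.card_filter] at h
  push_cast at h
  have hexp : ∀ u v w, (if Gᶜ.Adj u v ∧ Gᶜ.Adj u w ∧ Gᶜ.Adj v w then (1 : ℤ) else 0) =
      1 - C u v - C u w - C v w + C u v * C u w + C u v * C v w + C u w * C v w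
        - C u v * C u w * C v w := by
    intro u v w
    have : (if Gᶜ.Adj u v ∧ Gᶜ.Adj u w ∧ Gᶜ.Adj v w then (1 : ℤ) else 0) =
        (if Gᶜ.Adj u v then 1 else 0) * (if Gᶜ.Adj u w then 1 else 0) *
          (if Gᶜ.Adj v w then 1 else 0) := by
      split_ifs <;> simp_all
    rw [this, hB, hB, hB]
    ring
  have h₁ : ∑ u, ∑ v, ∑ w, C u v * C u w = ∑ v, ((G.degree v : ℤ) + 1) ^ 2 := by
    simp only [← Finset.mul_sum, ← Finset.sum_mul, hCsum, sq]
  have h₂ : ∑ u, ∑ v, ∑ w, C u v * C v w = ∑ v, ((G.degree v : ℤ) + 1) ^ 2 := by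
    rw [Finset.sum_comm]
    simp only [← Finset.mul_sum, ← Finset.sum_mul, hCsum, hCsum', sq]
  have h₃ : ∑ u, ∑ v, ∑ w, C u w * C v w = ∑ v, ((G.degree v : ℤ) + 1) ^ 2 := by
    simp only [Finset.sum_comm (s := Finset.univ) (f := fun v w => C _ w * C v w)]
    rw [Finset.sum_comm]
    simp only [← Finset.mul_sum, ← Finset.sum_mul, hCsum', sq]
  rw [h]
  simp only [Fintype.sum_prod_type, hexp, Finset.sum_sub_distrib, Finset.sum_add_distrib, htri,
    h₁, h₂, h₃]
  have h₄ : ∑ u, ∑ v, ∑ _w : V, C u v = Fintype.card V * ∑ v, ((G.degree v : ℤ) + 1) := by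
    simp [← Finset.mul_sum, hCsum]
  have h₅ : ∑ u, ∑ _v : V, ∑ w, C u w = Fintype.card V * ∑ v, ((G.degree v : ℤ) + 1) := by
    simp [← Finset.mul_sum, hCsum]
  have h₆ : ∑ _u : V, ∑ v, ∑ w, C v w = Fintype.card V * ∑ v, ((G.degree v : ℤ) + 1) := by
    simp [hCsum]
  rw [h₄, h₅, h₆]
  simp [Finset.sum_add_distrib]
  ring

theorem orderedTriangleCount_le_six {V : Type*} [Fintype V] {G : SimpleGraph V}
    [DecidableRel G.Adj] (hc : G.Connected) (hcard : Nat.card G.edgeSet = Nat.card V) {a b c : V}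
    (hab : G.Adj a b) (hbc : G.Adj b c) (hac : G.Adj a c) : orderedTriangleCount G ≤ 6 := by
  classical
  refine (Finset.card_le_card (t := {(a, b, c), (a, c, b), (b, a, c), (b, c, a), (c, a, b),
    (c, b, a)}) ?_).trans Finset.card_le_six
  rintro ⟨x, y, z⟩ h
  simp only [Finset.mem_filter, Finset.mem_univ, true_and] at h
  obtain ⟨hxy, hxz, hyz⟩ := h
  have h₁ := triangle_edge_mem_triangle hc hcard hab hbc hac hxy hyz hxz
  have h₂ := triangle_edge_mem_triangle hc hcard hac hbc.symm hab hxy hyz hxz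
  have := hab.ne
  have := hac.ne
  have := hbc.ne
  simp only [Sym2.eq_iff, Finset.mem_insert, Finset.mem_singleton, Prod.mk.injEq] at h₁ h₂ ⊢
  grind

theorem cycleGraph_degree_eq_two {n : ℕ} (hn : 3 ≤ n) [DecidableRel (cycleGraph n).Adj]
    (v : Fin n) : (cycleGraph n).degree v = 2 := by
  obtain ⟨m, rfl⟩ := Nat.exists_eq_add_of_le' hn
  rw [← cycleGraph_degree_three_le (v := v)]
  congr!

theorem orderedTriangleCount_cycleGraph {n : ℕ} (hn : 4 ≤ n) [DecidableRel (cycleGraph n).Adj] :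
    orderedTriangleCount (cycleGraph n) = 0 := by
  rw [orderedTriangleCount, Finset.card_eq_zero, Finset.filter_eq_empty_iff]
  rintro ⟨u, v, w⟩ -
  simp only [cycleGraph_adj_iff_val (by omega : 2 ≤ n)]
  omega

/-- A connected graph on at least four vertices with degrees `d` satisfying `∑ (d - 2) = 0` and
`∑ (d - 2) ^ 2 ≤ 2`, and with a triangle, is a triangle with a pendant path. -/
theorem nonempty_iso_dGraph_of_sum_le {V : Type*} [Fintype V] {G : SimpleGraph V}
    [DecidableRel G.Adj] (hc : G.Connected) (hcard : 4 ≤ Fintype.card V)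
    (hsum : ∑ v, ((G.degree v : ℤ) - 2) = 0) (hsq : ∑ v, ((G.degree v : ℤ) - 2) ^ 2 ≤ 2)
    {a b c : V} (hab : G.Adj a b) (hbc : G.Adj b c) (hac : G.Adj a c) :
    Nonempty (G ≃g dGraph (Fintype.card V)) := by
  classical
  have hle : ∀ v, G.degree v ≤ 3 := by
    intro v
    have := Finset.single_le_sum (f := fun v => ((G.degree v : ℤ) - 2) ^ 2)
      (fun v _ => sq_nonneg _) (Finset.mem_univ v)
    by_contra! h
    have : (4 : ℤ) ≤ G.degree v := by exact_mod_cast h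
    nlinarith
  have huniq : ∀ u, 3 ≤ G.degree u → ∀ v, v ≠ u → G.degree v ≤ 2 := by
    intro u hu v hvu
    by_contra! hv
    have hu3 : (G.degree u : ℤ) = 3 := by exact_mod_cast (hle u).antisymm hu
    have hv3 : (G.degree v : ℤ) = 3 := by exact_mod_cast (hle v).antisymm hv
    have hmem : v ∈ (Finset.univ : Finset V).erase u := by simp [hvu]
    rw [← Finset.add_sum_erase _ _ (Finset.mem_univ u), ← Finset.add_sum_erase _ _ hmem, hu3, hv3]
      at hsq hsum
    have hzero : ∀ w ∈ (Finset.univ.erase u).erase v, ((G.degree w : ℤ) - 2) ^ 2 = 0 :=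
      (Finset.sum_eq_zero_iff_of_nonneg fun w _ => sq_nonneg _).1
        (le_antisymm (by linarith) (Finset.sum_nonneg fun w _ => sq_nonneg _))
    rw [Finset.sum_eq_zero fun w hw => pow_eq_zero_iff two_ne_zero |>.1 (hzero w hw)] at hsum
    norm_num at hsum
  have hthree : 3 ≤ G.degree a ∨ 3 ≤ G.degree b ∨ 3 ≤ G.degree c := by
    by_contra! hlt
    obtain ⟨v, hv⟩ : ∃ v, v ∉ ({a, b, c} : Finset V) := by
      by_contra! h
      have := Finset.card_le_card (fun v _ => h v : Finset.univ ⊆ ({a, b, c} : Finset V))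
      have := Finset.card_le_three (a := a) (b := b) (c := c)
      rw [Finset.card_univ] at *
      omega
    obtain ⟨q⟩ := hc.preconnected a v
    obtain ⟨d, -, hd, hd'⟩ := q.exists_boundary_dart (({a, b, c} : Finset V) : Set V)
      (by simp) (by simpa using hv)
    simp only [Finset.coe_insert, Finset.coe_singleton, Set.mem_insert_iff,
      Set.mem_singleton_iff] at hd hd'
    have hadj := d.adj
    have := hab.ne
    have := hbc.ne
    have := hac.ne
    rcases hd with h | h | h <;> rw [h] at hadj
    · have := eq_of_degree_le_two (by omega) hadj hab hac
      tauto
    · have := eq_of_degree_le_two (by omega) hadj hab.symm hbc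
      tauto
    · have := eq_of_degree_le_two (by omega) hadj hac.symm hbc.symm
      tauto
  rcases hthree with h | h | h
  · exact nonempty_iso_dGraph hc hbc hac.symm hab.symm (hle a) (huniq a h)
  · exact nonempty_iso_dGraph hc hac hbc.symm hab (hle b) (huniq b h)
  · exact nonempty_iso_dGraph hc hab hbc hac (hle c) (huniq c h)

theorem indepEquiv_primeCycle {V : Type*} [Fintype V] (G : SimpleGraph V) (p : ℕ)
    (hp : p.Prime) (hodd : Odd p)
    (h : ∀ k, indepCount G k = indepCount (SimpleGraph.cycleGraph p) k) :
    Nonempty (G ≃g SimpleGraph.cycleGraph p) ∨ Nonempty (G ≃g dGraph p) := by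
  classical
  have hp3 : 3 ≤ p := by
    have := hp.two_le
    obtain ⟨m, rfl⟩ := hodd
    omega
  have hcard : Fintype.card V = p := by
    rw [← indepCount_one G, h, indepCount_one, Fintype.card_fin]
  have hc : G.Connected := connected_of_prime_dvd_indepCount G hp hcard fun k hk => by
    rw [h]
    exact prime_dvd_indepCount_cycleGraph hp hp3 hk
  have hdegC := cycleGraph_degree_eq_two hp3
  have hsum : ∑ v, ((G.degree v : ℤ) + 1) = 3 * p := by
    have h₁ := two_mul_indepCount_two_eq G
    rw [h, two_mul_indepCount_two_eq, Fintype.card_fin, hcard] at h₁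
    simp only [hdegC] at h₁
    simp at h₁
    linarith
  have hsum' : ∑ v, (G.degree v : ℤ) = 2 * p := by
    rw [Finset.sum_add_distrib] at hsum
    simp [hcard] at hsum
    linarith
  have hzero : ∑ v, ((G.degree v : ℤ) - 2) = 0 := by
    rw [Finset.sum_sub_distrib, hsum']
    simp [hcard, mul_comm]
  have hedge : Nat.card G.edgeSet = Nat.card V := by
    have h₁ := G.sum_degrees_eq_twice_card_edges
    have h₂ : ∑ v, G.degree v = 2 * p := by exact_mod_cast hsum'
    rw [Nat.card_eq_fintype_card, Nat.card_eq_fintype_card, hcard, ← edgeFinset_card]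
    omega
  have hcycle : (∀ v, G.degree v = 2) → Nonempty (G ≃g cycleGraph p) := fun hdeg =>
    hcard ▸ nonempty_iso_cycleGraph hc hedge hdeg
  rcases hp3.eq_or_lt with rfl | hp4
  · refine Or.inl (hcycle fun v => ?_)
    have hle : ∀ v ∈ Finset.univ, (G.degree v : ℤ) - 2 ≤ 0 := fun v _ => by
      have := G.degree_lt_card_verts v
      omega
    have := (Finset.sum_eq_zero_iff_of_nonpos hle).1 hzero v (Finset.mem_univ v)
    omega
  have hsq : 3 * ∑ v, ((G.degree v : ℤ) - 2) ^ 2 = (orderedTriangleCount G : ℤ) := by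
    have h₁ := six_mul_indepCount_three_eq G
    rw [h, six_mul_indepCount_three_eq, Fintype.card_fin, hcard, hsum, hsum',
      orderedTriangleCount_cycleGraph hp4] at h₁
    simp only [hdegC] at h₁
    have h₂ : ∀ v, ((G.degree v : ℤ) - 2) ^ 2 =
        ((G.degree v : ℤ) + 1) ^ 2 - 6 * (G.degree v : ℤ) + 3 := fun v => by ring
    simp only [h₂, Finset.sum_add_distrib, Finset.sum_sub_distrib, ← Finset.mul_sum, hsum']
    simp [hcard] at h₁ ⊢
    linarith
  by_cases htri : ∃ a b c, G.Adj a b ∧ G.Adj b c ∧ G.Adj a c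
  · obtain ⟨a, b, c, hab, hbc, hac⟩ := htri
    have h₁ : (orderedTriangleCount G : ℤ) ≤ 6 := by
      exact_mod_cast orderedTriangleCount_le_six hc hedge hab hbc hac
    right
    rw [← hcard]
    exact nonempty_iso_dGraph_of_sum_le hc (by omega) hzero (by linarith) hab hbc hac
  · have h₁ : orderedTriangleCount G = 0 := by
      rw [orderedTriangleCount, Finset.card_eq_zero, Finset.filter_eq_empty_iff]
      exact fun t _ ht => htri ⟨_, _, _, ht.1, ht.2.2, ht.2.1⟩
    rw [h₁, Nat.cast_zero, mul_eq_zero, or_iff_right (by norm_num),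
      Finset.sum_eq_zero_iff_of_nonneg fun v _ => sq_nonneg _] at hsq
    refine Or.inl (hcycle fun v => ?_)
    have := pow_eq_zero_iff two_ne_zero |>.1 (hsq v (Finset.mem_univ v))
    omega
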